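/- The set of odd positive integers n such that 3 does not divide ⌊2·√(3^n)⌋ is infinite. -/

import Mathlib

/-!
With `n = 2 * k + 1` one has `2 * √(3 ^ n) = (2 * √3) * 3 ^ k`, so the residue of the floor mod `3` is
the `k`-th base-`3` digit of the irrational number `2 * √3`. A vanishing digit means that passing
from `y` to `3 * y` multiplies the fractional part by exactly `3` (`fract_three_mul`). If all digits
vanished from some point on, a positive fractional part would grow like `3 ^ j` while staying
below `1`; hence the digits of an irrational number do not eventually vanish
(`exists_not_three_dvd_floor`).
-/

lemma fract_three_mul (y : ℝ) (h : (3 : ℤ) ∣ ⌊3 * y⌋) : Int.fract (3 * y) = 3 * Int.fract y := by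
  obtain ⟨m, hm⟩ := h
  have hy : ⌊y⌋ = m := by
    have h1 := Int.floor_le (3 * y)
    have h2 := Int.lt_floor_add_one (3 * y)
    rw [hm] at h1 h2
    push_cast at h1 h2
    -- `3 * y < 3 * m + 1` is stronger than the bound `y < m + 1` needed here.
    exact Int.floor_eq_iff.2 ⟨by linarith, by linarith⟩
  rw [Int.fract, Int.fract, hm, hy]
  push_cast
  ring

lemma exists_not_three_dvd_floor (x : ℝ) (hx : Irrational x) (N : ℕ) :
    ∃ k, N ≤ k ∧ ¬ (3 : ℤ) ∣ ⌊x * 3 ^ k⌋ := by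
  by_contra! h
  have key : ∀ j : ℕ, Int.fract (x * 3 ^ (N + j)) = 3 ^ j * Int.fract (x * 3 ^ N) := by
    intro j
    induction j with
    | zero => simp
    | succ j ih =>
      have e : x * 3 ^ (N + (j + 1)) = 3 * (x * 3 ^ (N + j)) := by ring
      have hd := h (N + (j + 1)) (by omega)
      rw [e] at hd ⊢
      rw [fract_three_mul _ hd, ih]
      ring
  have hirr : Irrational (x * 3 ^ N) := by
    have := hx.mul_natCast (m := 3 ^ N) (by positivity)
    exact_mod_cast this
  have hpos : 0 < Int.fract (x * 3 ^ N) := by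
    refine Int.fract_pos.2 fun h0 => ?_
    exact hirr.ne_int _ h0
  obtain ⟨j, hj⟩ := pow_unbounded_of_one_lt (1 / Int.fract (x * 3 ^ N)) (by norm_num : (1 : ℝ) < 3)
  rw [div_lt_iff₀ hpos, ← key j] at hj
  exact absurd (Int.fract_lt_one (x * 3 ^ (N + j))) (by linarith)

theorem stmt_18 :
    {n : ℕ | Odd n ∧ 0 < n ∧ ¬ (3 : ℤ) ∣ ⌊2 * Real.sqrt ((3 : ℝ) ^ n)⌋}.Infinite := by
  refine Set.infinite_of_forall_exists_gt fun N => ?_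
  have hirr : Irrational (2 * Real.sqrt 3) := by
    have := (Nat.prime_three.irrational_sqrt).natCast_mul (m := 2) (by norm_num)
    exact_mod_cast this
  obtain ⟨k, hk, hd⟩ := exists_not_three_dvd_floor _ hirr N
  refine ⟨2 * k + 1, ⟨⟨k, rfl⟩, by omega, ?_⟩, by omega⟩
  have e : Real.sqrt ((3 : ℝ) ^ (2 * k + 1)) = Real.sqrt 3 * 3 ^ k := by
    rw [show (3 : ℝ) ^ (2 * k + 1) = 3 * (3 ^ k) ^ 2 by ring, Real.sqrt_mul (by norm_num),
      Real.sqrt_sq (by positivity)]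
  rwa [e, ← mul_assoc]
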